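/- arXiv:1012.2167 — 2 statements merged into one kernel-verified Lean document; each statement's English description precedes it below -/
import Mathlib

section
/- For every integer $n \ge 0$, $a_{n+1} - a_n = \int_0^\infty \frac{1}{(1+e^t)^2}\left(\frac{t^{2n+1}}{(2n+1)!} + \frac{t^{2n}}{(2n)!}\right) dt$. -/
open MeasureTheory

/-- `a 0 = 1/2`, and for `n ≥ 1`, `a n = ζ(2n)(1 - 2^(1-2n))`
(a real number, expressed via the real part of `riemannZeta`). -/
noncomputable def a (n : ℕ) : ℝ :=
  if n = 0 then 1 / 2
  else (riemannZeta (2 * n)).re * (1 - (2 : ℝ) ^ ((1 : ℤ) - 2 * n))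

lemma aux_intF (k : ℕ) : IntegrableOn (fun t : ℝ => Real.exp (-t) * (t ^ k / (Nat.factorial k : ℝ))) (Set.Ioi 0) := by
  have h := Real.GammaIntegral_convergent (s := (k:ℝ) + 1) (by positivity)
  refine IntegrableOn.congr_fun (h.div_const (Nat.factorial k : ℝ)) (fun t ht => ?_) measurableSet_Ioi
  simp only [add_sub_cancel_right, Real.rpow_natCast]
  ring

lemma aux_le (t : ℝ) : 1 / (1 + Real.exp t) ≤ Real.exp (-t) := by
  rw [Real.exp_neg, ← one_div]
  exact one_div_le_one_div_of_le (Real.exp_pos t) (by linarith)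

lemma aux_le_one (t : ℝ) : 1 / (1 + Real.exp t) ≤ 1 := by
  rw [div_le_one (by positivity)]
  linarith [Real.exp_pos t]

lemma aux_cont : Continuous (fun t : ℝ => 1 / (1 + Real.exp t)) :=
  continuous_const.div (by fun_prop) (fun t => by positivity)

lemma aux_int1 (k : ℕ) : IntegrableOn
    (fun t : ℝ => (1 / (1 + Real.exp t)) * (t ^ k / (Nat.factorial k : ℝ))) (Set.Ioi 0) := by
  refine Integrable.mono' (aux_intF k) ?_ ?_
  · exact (aux_cont.mul (by fun_prop)).aestronglyMeasurable
  · filter_upwards [ae_restrict_mem measurableSet_Ioi] with t ht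
    have ht : 0 < t := ht
    rw [Real.norm_of_nonneg (by positivity)]
    exact mul_le_mul_of_nonneg_right (aux_le t) (by positivity)

lemma aux_int2 (k : ℕ) : IntegrableOn
    (fun t : ℝ => (1 / (1 + Real.exp t) ^ 2) * (t ^ k / (Nat.factorial k : ℝ))) (Set.Ioi 0) := by
  refine Integrable.mono' (aux_int1 k) ?_ ?_
  · exact (Continuous.mul (continuous_const.div (by fun_prop) (fun t => by positivity))
      (by fun_prop)).aestronglyMeasurable
  · filter_upwards [ae_restrict_mem measurableSet_Ioi] with t ht
    have ht : 0 < t := ht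
    rw [Real.norm_of_nonneg (by positivity)]
    refine mul_le_mul_of_nonneg_right ?_ (by positivity)
    have h0 : 0 ≤ 1 / (1 + Real.exp t) := by positivity
    have := mul_le_mul_of_nonneg_left (aux_le_one t) h0
    calc _ = 1 / (1 + Real.exp t) * (1 / (1 + Real.exp t)) := by field_simp
      _ ≤ _ := by simpa using this

lemma aux_tend (k : ℕ) : Filter.Tendsto
    (fun t : ℝ => (1 / (1 + Real.exp t)) * (t ^ k / (Nat.factorial k : ℝ))) Filter.atTop (nhds 0) := by
  have h := (Real.tendsto_pow_mul_exp_neg_atTop_nhds_zero k).div_const (Nat.factorial k : ℝ)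
  rw [zero_div] at h
  refine squeeze_zero' ?_ ?_ h
  · filter_upwards [Filter.eventually_ge_atTop 0] with t ht
    positivity
  · filter_upwards [Filter.eventually_ge_atTop 0] with t ht
    calc _ ≤ Real.exp (-t) * (t ^ k / (Nat.factorial k : ℝ)) :=
          mul_le_mul_of_nonneg_right (aux_le t) (by positivity)
      _ = _ := by ring

lemma aux_deriv (t : ℝ) : HasDerivAt (fun t : ℝ => 1 / (1 + Real.exp t))
    (1 / (1 + Real.exp t) ^ 2 - 1 / (1 + Real.exp t)) t := by
  have h := ((Real.hasDerivAt_exp t).const_add 1).inv (by positivity)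
  simp only [one_div]
  convert! h using 1
  field_simp
  ring

lemma aux_ibp_zero : ∫ t in Set.Ioi (0 : ℝ),
      (1 / (1 + Real.exp t) ^ 2) * (t ^ 0 / (Nat.factorial 0 : ℝ)) =
    (∫ t in Set.Ioi (0 : ℝ), (1 / (1 + Real.exp t)) * (t ^ 0 / (Nat.factorial 0 : ℝ))) - 1 / 2 := by
  have h := integral_Ioi_of_hasDerivAt_of_tendsto' (a := 0) (m := 0)
    (f := fun t : ℝ => (1 / (1 + Real.exp t)) * (t ^ 0 / (Nat.factorial 0 : ℝ)))
    (f' := fun t : ℝ => (1 / (1 + Real.exp t) ^ 2) * (t ^ 0 / (Nat.factorial 0 : ℝ)) -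
      (1 / (1 + Real.exp t)) * (t ^ 0 / (Nat.factorial 0 : ℝ)))
    (fun t _ => by simpa using aux_deriv t)
    ((aux_int2 0).sub (aux_int1 0)) (aux_tend 0)
  rw [integral_sub (aux_int2 0) (aux_int1 0)] at h
  norm_num at h ⊢
  linarith

lemma aux_ibp_succ (k : ℕ) : ∫ t in Set.Ioi (0 : ℝ),
      (1 / (1 + Real.exp t) ^ 2) * (t ^ (k + 1) / (Nat.factorial (k + 1) : ℝ)) =
    (∫ t in Set.Ioi (0 : ℝ),
      (1 / (1 + Real.exp t)) * (t ^ (k + 1) / (Nat.factorial (k + 1) : ℝ))) -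
    ∫ t in Set.Ioi (0 : ℝ), (1 / (1 + Real.exp t)) * (t ^ k / (Nat.factorial k : ℝ)) := by
  have h := integral_Ioi_of_hasDerivAt_of_tendsto' (a := 0) (m := 0)
    (f := fun t : ℝ => (1 / (1 + Real.exp t)) * (t ^ (k + 1) / (Nat.factorial (k + 1) : ℝ)))
    (f' := fun t : ℝ => ((1 / (1 + Real.exp t) ^ 2) * (t ^ (k + 1) / (Nat.factorial (k + 1) : ℝ)) -
      (1 / (1 + Real.exp t)) * (t ^ (k + 1) / (Nat.factorial (k + 1) : ℝ))) +
      (1 / (1 + Real.exp t)) * (t ^ k / (Nat.factorial k : ℝ)))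
    (fun t _ => by
      convert! (aux_deriv t).mul ((hasDerivAt_pow (k + 1) t).div_const
        (Nat.factorial (k + 1) : ℝ)) using 1
      rw [Nat.factorial_succ]
      push_cast
      have : (Nat.factorial k : ℝ) ≠ 0 := by positivity
      field_simp)
    (((aux_int2 (k + 1)).sub (aux_int1 (k + 1))).add (aux_int1 k)) (aux_tend (k + 1))
  have hs : IntegrableOn (fun t : ℝ =>
      (1 / (1 + Real.exp t) ^ 2) * (t ^ (k + 1) / (Nat.factorial (k + 1) : ℝ)) -
      (1 / (1 + Real.exp t)) * (t ^ (k + 1) / (Nat.factorial (k + 1) : ℝ))) (Set.Ioi 0) :=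
    (aux_int2 (k + 1)).sub (aux_int1 (k + 1))
  rw [integral_add hs (aux_int1 k),
    integral_sub (aux_int2 (k + 1)) (aux_int1 (k + 1))] at h
  simp only [zero_pow (Nat.succ_ne_zero k), zero_div, mul_zero, sub_zero] at h
  linarith

lemma aux_geom {t : ℝ} (ht : 0 < t) :
    HasSum (fun i : ℕ => Real.exp (-((i : ℝ) + 1) * t)) (1 / (Real.exp t - 1)) := by
  have h := (hasSum_geometric_of_lt_one (Real.exp_pos (-t)).le
    (by rw [Real.exp_lt_one_iff]; linarith : Real.exp (-t) < 1)).mul_left (Real.exp (-t))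
  have e : 1 < Real.exp t := by rw [Real.one_lt_exp_iff]; exact ht
  convert! h using 1
  · ext i
    rw [← Real.exp_nat_mul, ← Real.exp_add]
    ring_nf
  · rw [Real.exp_neg]
    have : Real.exp t - 1 ≠ 0 := by linarith
    have : 1 - (Real.exp t)⁻¹ ≠ 0 := by
      have := inv_lt_one_of_one_lt₀ e
      linarith
    field_simp

lemma aux_eta (k : ℕ) (hk : 1 ≤ k) :
    ∫ t in Set.Ioi (0 : ℝ), (1 / (1 + Real.exp t)) * (t ^ k / (Nat.factorial k : ℝ)) =
      (riemannZeta ((k + 1 : ℕ) : ℂ)).re * (1 - (2 : ℝ) ^ ((1 : ℤ) - (k + 1 : ℕ))) := by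
  have hk' : 1 < (((k + 1 : ℕ) : ℂ)).re := by
    rw [Complex.natCast_re]; exact_mod_cast Nat.lt_succ_of_le hk
  have hsr : Summable (fun i : ℕ => 1 / ((i : ℝ) + 1) ^ (k + 1)) := by
    have := (summable_nat_add_iff 1).2 (Real.summable_one_div_nat_pow.2 (Nat.lt_succ_of_le hk))
    simpa using this
  have hz : HasSum (fun i : ℕ => 1 / ((i : ℂ) + 1) ^ (k + 1)) (riemannZeta ((k + 1 : ℕ) : ℂ)) := by
    have h1 := zeta_eq_tsum_one_div_nat_add_one_cpow hk'
    simp only [Complex.cpow_natCast] at h1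
    rw [h1]
    refine Summable.hasSum (Summable.of_norm ?_)
    convert! hsr using 2 with i
    rw [norm_div, norm_pow, ← Nat.cast_succ, Complex.norm_natCast]
    simp
  have key := hasSum_mellin (ι := ℕ ⊕ ℕ) (a := Sum.elim (fun _ => (1 : ℂ)) (fun _ => -2))
    (p := Sum.elim (fun i => (i : ℝ) + 1) (fun i => 2 * ((i : ℝ) + 1)))
    (F := fun t => ((1 / (1 + Real.exp t) : ℝ) : ℂ)) (s := ((k + 1 : ℕ) : ℂ))
    (by rintro (i | i) <;> right <;> simp <;> positivity)
    (by linarith)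
    (by
      intro t ht
      have ht : 0 < t := ht
      have e : 1 < Real.exp t := by rw [Real.one_lt_exp_iff]; exact ht
      have g1 := aux_geom ht
      have g2 := (aux_geom (t := 2 * t) (by linarith)).mul_left (-2)
      have : (1 / (1 + Real.exp t) : ℝ) =
          1 / (Real.exp t - 1) + -2 * (1 / (Real.exp (2 * t) - 1)) := by
        have e2 : Real.exp (2 * t) = Real.exp t ^ 2 := by rw [← Real.exp_nat_mul]; norm_num
        have h3 : Real.exp t - 1 ≠ 0 := by linarith
        have h4 : Real.exp t + 1 ≠ 0 := by positivity
        have : Real.exp (2 * t) - 1 = (Real.exp t - 1) * (Real.exp t + 1) := by rw [e2]; ring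
        rw [this]
        field_simp
        ring
      rw [this, Complex.ofReal_add]
      refine HasSum.sum ?_ ?_
      · convert! Complex.hasSum_ofReal.2 g1 using 2 with i
        simp only [Function.comp, Sum.elim_inl, one_mul]
      · convert! Complex.hasSum_ofReal.2 g2 using 2 with i
        simp only [Function.comp, Sum.elim_inr]
        push_cast
        ring_nf)
    (by
      simp only [Complex.natCast_re, Real.rpow_natCast]
      refine Summable.sum _ ?_ ?_
      · convert! hsr using 2 with i
        simp
      · convert! hsr.mul_left (2 / 2 ^ (k + 1)) using 2 with i
        simp only [Function.comp, Sum.elim_inr, mul_pow]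
        norm_num
        field_simp)
  have key2 : HasSum (fun i : ℕ ⊕ ℕ => Complex.Gamma ((k + 1 : ℕ) : ℂ) *
      (Sum.elim (fun _ => (1 : ℂ)) (fun _ => -2) i) /
      ((Sum.elim (fun i : ℕ => (i : ℝ) + 1) (fun i : ℕ => 2 * ((i : ℝ) + 1)) i : ℝ) : ℂ) ^
        ((k + 1 : ℕ) : ℂ))
      ((Nat.factorial k : ℂ) * riemannZeta ((k + 1 : ℕ) : ℂ) +
        ((Nat.factorial k : ℂ) * (-2 / 2 ^ (k + 1))) * riemannZeta ((k + 1 : ℕ) : ℂ)) := by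
    have hG : Complex.Gamma ((k + 1 : ℕ) : ℂ) = Nat.factorial k := by
      rw [Nat.cast_succ, Complex.Gamma_nat_eq_factorial]
    rw [hG]
    simp only [Complex.cpow_natCast]
    refine HasSum.sum ?_ ?_
    · convert! hz.mul_left (Nat.factorial k : ℂ) using 2 with i
      simp [div_eq_mul_inv]
    · convert! hz.mul_left ((Nat.factorial k : ℂ) * (-2 / 2 ^ (k + 1))) using 2 with i
      simp only [Function.comp, Sum.elim_inr]
      push_cast
      rw [mul_pow]
      field_simp
  have h := key.unique key2
  have hm : mellin (fun t => ((1 / (1 + Real.exp t) : ℝ) : ℂ)) ((k + 1 : ℕ) : ℂ) =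
      (((Nat.factorial k : ℝ) * ∫ t in Set.Ioi (0 : ℝ),
        (1 / (1 + Real.exp t)) * (t ^ k / (Nat.factorial k : ℝ)) : ℝ) : ℂ) := by
    rw [← integral_const_mul, mellin, ← integral_complex_ofReal]
    refine setIntegral_congr_fun measurableSet_Ioi (fun t ht => ?_)
    have : (((k + 1 : ℕ) : ℂ)) - 1 = (k : ℂ) := by push_cast; ring
    have hf : (Nat.factorial k : ℂ) ≠ 0 := by exact_mod_cast Nat.factorial_ne_zero k
    simp only [this, Complex.cpow_natCast, smul_eq_mul]
    push_cast
    field_simp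
  rw [hm] at h
  have hf : (Nat.factorial k : ℝ) ≠ 0 := by positivity
  have h5 := congrArg Complex.re h
  have h6 : (Nat.factorial k : ℂ) * riemannZeta ((k + 1 : ℕ) : ℂ) +
        ((Nat.factorial k : ℂ) * (-2 / 2 ^ (k + 1))) * riemannZeta ((k + 1 : ℕ) : ℂ) =
      (((Nat.factorial k : ℝ) * (1 - 2 / 2 ^ (k + 1)) : ℝ) : ℂ) *
        riemannZeta ((k + 1 : ℕ) : ℂ) := by
    push_cast; ring
  rw [h6, Complex.ofReal_re, Complex.re_ofReal_mul, mul_assoc] at h5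
  rw [mul_left_cancel₀ hf h5, mul_comm, zpow_sub₀ two_ne_zero, zpow_one, zpow_natCast]

lemma aux_a (n : ℕ) : a (n + 1) = ∫ t in Set.Ioi (0 : ℝ),
    (1 / (1 + Real.exp t)) * (t ^ (2 * n + 1) / (Nat.factorial (2 * n + 1) : ℝ)) := by
  rw [aux_eta _ (by omega), a, if_neg (Nat.succ_ne_zero n)]
  push_cast
  ring_nf

/-- For every `n ≥ 0`,
`a (n+1) - a n = ∫₀^∞ (1/(1+eᵗ)²) (t^(2n+1)/(2n+1)! + t^(2n)/(2n)!) dt`. -/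
theorem a_succ_sub_a (n : ℕ) :
    a (n + 1) - a n =
      ∫ t in Set.Ioi (0 : ℝ),
        (1 / (1 + Real.exp t) ^ 2) *
          (t ^ (2 * n + 1) / (Nat.factorial (2 * n + 1)) +
            t ^ (2 * n) / (Nat.factorial (2 * n))) := by
  simp only [mul_add]
  rw [integral_add (aux_int2 _) (aux_int2 _), aux_ibp_succ, aux_a]
  rcases n with _ | m
  · simp only [mul_zero]
    rw [aux_ibp_zero, a, if_pos rfl]
    ring
  · rw [aux_a m, show 2 * (m + 1) = (2 * m + 1) + 1 by ring, aux_ibp_succ (2 * m + 1)]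
    ring
end

section
/- There exist constants $c, C > 0$ such that for all real $L \ge 0$, $\sum_{s=1}^{\infty} \frac{L^{2s}}{s!\,(2s)!} \le C\, e^{c\, L^{2/3}}$. -/
/-- There are constants `c, C > 0` such that for all `L ≥ 0`,
`∑_{s=1}^∞ L^(2s) / (s! (2s)!) ≤ C e^(c L^(2/3))`. -/
theorem series_subexponential_bound :
    ∃ c : ℝ, 0 < c ∧ ∃ C : ℝ, 0 < C ∧ ∀ L : ℝ, 0 ≤ L →
      (∑' s : ℕ, L ^ (2 * (s + 1)) /
          (Nat.factorial (s + 1) * Nat.factorial (2 * (s + 1)))) ≤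
        C * Real.exp (c * L ^ ((2 : ℝ) / 3)) := by
  refine ⟨3, by norm_num, 1, one_pos, fun L hL => ?_⟩
  obtain ⟨x, hx⟩ : ∃ x : ℝ, x = L ^ ((2 : ℝ) / 3) := ⟨_, rfl⟩
  have hx0 : 0 ≤ x := hx ▸ Real.rpow_nonneg hL _
  have hx3 : L ^ 2 = x ^ 3 := by
    rw [hx, ← Real.rpow_natCast (L ^ ((2 : ℝ) / 3)), ← Real.rpow_mul hL, ← Real.rpow_natCast L]
    norm_num
  rw [← hx]
  have hterm : ∀ k : ℕ, L ^ (2 * k) / ((Nat.factorial k : ℝ) * Nat.factorial (2 * k)) ≤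
      Real.exp x ^ 2 * (x ^ k / Nat.factorial k) := by
    intro k
    have hk : (0 : ℝ) < Nat.factorial k := by exact_mod_cast Nat.factorial_pos k
    have hf : (Nat.factorial k : ℝ) * Nat.factorial k ≤ Nat.factorial (2 * k) := by
      have h := Nat.le_of_dvd (Nat.factorial_pos _) (Nat.factorial_mul_factorial_dvd_factorial_add k k)
      rw [← two_mul] at h
      exact_mod_cast h
    have hp : x ^ k / (Nat.factorial k : ℝ) ≤ Real.exp x := Real.pow_div_factorial_le_exp x hx0 k
    have h0 : 0 ≤ x ^ k / (Nat.factorial k : ℝ) := by positivity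
    calc L ^ (2 * k) / ((Nat.factorial k : ℝ) * Nat.factorial (2 * k))
        ≤ L ^ (2 * k) / ((Nat.factorial k : ℝ) * (Nat.factorial k * Nat.factorial k)) := by
          gcongr
      _ = (x ^ k / Nat.factorial k) ^ 2 * (x ^ k / Nat.factorial k) := by
          rw [pow_mul, hx3]
          field_simp
          ring
      _ ≤ _ := by gcongr
  apply Real.tsum_le_of_sum_range_le
  · intro n
    positivity
  · intro n
    have h1 := Real.sum_le_exp_of_nonneg hx0 (n + 1)
    rw [Finset.sum_range_succ'] at h1
    have h2 : ∑ i ∈ Finset.range n, x ^ (i + 1) / (Nat.factorial (i + 1) : ℝ) ≤ Real.exp x := by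
      refine le_trans ?_ h1
      simp
    calc _ ≤ ∑ i ∈ Finset.range n, Real.exp x ^ 2 * (x ^ (i + 1) / (Nat.factorial (i + 1) : ℝ)) :=
          Finset.sum_le_sum fun i _ => hterm (i + 1)
      _ = Real.exp x ^ 2 * ∑ i ∈ Finset.range n, x ^ (i + 1) / (Nat.factorial (i + 1) : ℝ) := by
          rw [Finset.mul_sum]
      _ ≤ Real.exp x ^ 2 * Real.exp x := by gcongr
      _ = 1 * Real.exp (3 * x) := by
          rw [one_mul, ← pow_succ, ← Real.exp_nat_mul]
          norm_num
end
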